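/- In the DP setting: for every v ∈ V_S and every X ⊆ V_R, if D[X, v] < ∞ then there exists a desirable mapping of the induced subrequest G_R[X] into the subtree T_v whose induced cost is at most D[X, v]. -/

import Mathlib

open scoped BigOperators NNReal ENNReal Classical

/-- A rooted tree on vertex set `V`: a root together with a parent function such that the
root is its own parent and every vertex reaches the root by iterating the parent function.
The associated bidirectional tree substrate has the directed edges `(u, v)` and `(v, u)`
for every non-root `u` with parent `v`. -/
structure RTree (V : Type*) where
  root : V
  parent : V → V
  parent_root : parent root = root
  reaches_root : ∀ v : V, ∃ n : ℕ, parent^[n] v = root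

namespace RTree

variable {V : Type*}

/-- `u` is a child of `v`. -/
def IsChild (T : RTree V) (u v : V) : Prop := u ≠ v ∧ T.parent u = v

/-- `w` lies in the subtree `T_v` rooted at `v` (i.e. `w` is `v` or a descendant of `v`). -/
def InSubtree (T : RTree V) (v w : V) : Prop := ∃ n : ℕ, T.parent^[n] w = v

/-- The directed edge set of the bidirectional tree substrate associated to a rooted tree:
both orientations of every parent-child pair. -/
noncomputable def edges [Fintype V] [DecidableEq V] (T : RTree V) : Finset (V × V) :=
  Finset.univ.filter fun e => e.1 ≠ e.2 ∧ (T.parent e.1 = e.2 ∨ T.parent e.2 = e.1)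

end RTree

/-- A VNEP instance: a substrate digraph `(VS, ES)` with `τ`-dimensional node and edge
capacities (`dSv`, `dSe`, valued in `[0, ∞]`) and costs (`cSv`, `cSe`), and a request
digraph `(VR, ER)` with `τ`-dimensional node and edge demands (`dRv`, `dRe`). -/
structure VNEP (VS VR : Type*) (τ : ℕ) where
  ES : Finset (VS × VS)
  ER : Finset (VR × VR)
  dSv : VS → Fin τ → ℝ≥0∞
  dSe : VS × VS → Fin τ → ℝ≥0∞
  cSv : VS → Fin τ → ℝ≥0
  cSe : VS × VS → Fin τ → ℝ≥0
  dRv : VR → Fin τ → ℝ≥0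
  dRe : VR × VR → Fin τ → ℝ≥0

/-- The list of directed edges traversed by a path given as a list of vertices. -/
def pathEdges {α : Type*} (p : List α) : List (α × α) := p.zip p.tail

/-- A simple directed path from `a` to `b` with respect to the edge relation `E`, given as
its (nonempty, duplicate-free) list of vertices; a single-vertex list is a path of length
zero. -/
def IsDiPath {α : Type*} (E : α → α → Prop) (a b : α) (p : List α) : Prop :=
  p.head? = some a ∧ p.getLast? = some b ∧ List.Chain' E p ∧ p.Nodup

/-- A mapping of a request into a substrate: `mV` maps request nodes to substrate nodes and
`mE` assigns to each request edge a list of substrate vertices (its intended path). -/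
structure Mapping (VS VR : Type*) where
  mV : VR → VS
  mE : VR × VR → List VS

section VNEPDefs

variable {VS VR : Type*} {τ : ℕ}

/-- A mapping is valid if every request edge is mapped to a simple directed path in the
substrate between the images of its endpoints. -/
def Mapping.Valid (I : VNEP VS VR τ) (M : Mapping VS VR) : Prop :=
  ∀ e ∈ I.ER, IsDiPath (fun a b => (a, b) ∈ I.ES) (M.mV e.1) (M.mV e.2) (M.mE e)

/-- A mapping is feasible if it is valid and all node and edge capacities are respected by
the cumulative demands mapped onto them. -/
noncomputable def Mapping.Feasible [Fintype VR] [DecidableEq VS] (I : VNEP VS VR τ)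
    (M : Mapping VS VR) : Prop :=
  M.Valid I ∧
  (∀ v : VS, ∀ t : Fin τ,
    ((∑ w ∈ Finset.univ.filter (fun w => M.mV w = v), I.dRv w t : ℝ≥0) : ℝ≥0∞) ≤ I.dSv v t) ∧
  (∀ eS ∈ I.ES, ∀ t : Fin τ,
    ((∑ eR ∈ I.ER.filter (fun eR => eS ∈ pathEdges (M.mE eR)), I.dRe eR t : ℝ≥0) : ℝ≥0∞) ≤
      I.dSe eS t)

/-- The cost of a mapping: `∑_w ⟨d_R(w), c_S(m_V(w))⟩ + ∑_{e ∈ E_R} ∑_{e' ∈ m_E(e)}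
⟨d_R(e), c_S(e')⟩`. -/
noncomputable def Mapping.cost [Fintype VR] [DecidableEq VS] (I : VNEP VS VR τ)
    (M : Mapping VS VR) : ℝ≥0 :=
  (∑ w : VR, ∑ t, I.dRv w t * I.cSv (M.mV w) t) +
    ∑ e ∈ I.ER, ∑ e' ∈ (pathEdges (M.mE e)).toFinset, ∑ t, I.dRe e t * I.cSe e' t

end VNEPDefs
section DPDefs

variable {VS VR : Type*} {τ : ℕ}

/-- The set of children of `v` in the rooted tree `T`. -/
noncomputable def childrenOf [Fintype VS] (T : RTree VS) (v : VS) : Finset VS :=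
  Finset.univ.filter fun w => T.IsChild w v

/-- `cut(A)`: the request edges leaving `A`. -/
noncomputable def cutP (I : VNEP VS VR τ) (A : Finset VR) : Finset (VR × VR) :=
  I.ER.filter fun e => e.1 ∈ A ∧ e.2 ∉ A

/-- `cut⁻(A)`: the request edges entering `A`. -/
noncomputable def cutN (I : VNEP VS VR τ) (A : Finset VR) : Finset (VR × VR) :=
  I.ER.filter fun e => e.1 ∉ A ∧ e.2 ∈ A

/-- `E(G_R[X])`: the request edges with both endpoints in `X`. -/
noncomputable def ERin (I : VNEP VS VR τ) (X : Finset VR) : Finset (VR × VR) :=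
  I.ER.filter fun e => e.1 ∈ X ∧ e.2 ∈ X

/-- The auxiliary function `f(v, x, R)` of the dynamic program. -/
noncomputable def fDP (I : VNEP VS VR τ) (D : Finset VR → VS → ℝ≥0∞) (v x : VS)
    (R : Finset VR) : ℝ≥0∞ :=
  if (∀ t, ((∑ e ∈ cutP I R, I.dRe e t : ℝ≥0) : ℝ≥0∞) ≤ I.dSe (x, v) t) ∧
      (∀ t, ((∑ e ∈ cutN I R, I.dRe e t : ℝ≥0) : ℝ≥0∞) ≤ I.dSe (v, x) t) then
    D R x + ((∑ e ∈ cutN I R, ∑ t, I.dRe e t * I.cSe (v, x) t : ℝ≥0) : ℝ≥0∞)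
          + ((∑ e ∈ cutP I R, ∑ t, I.dRe e t * I.cSe (x, v) t : ℝ≥0) : ℝ≥0∞)
  else ⊤

/-- `D` is the DP table: it satisfies the defining recurrence of the dynamic program
(leaf case and internal-node case). -/
def IsDPTable [Fintype VS] (I : VNEP VS VR τ) (T : RTree VS)
    (D : Finset VR → VS → ℝ≥0∞) : Prop :=
  (∀ v : VS, childrenOf T v = ∅ → ∀ R : Finset VR,
    D R v = if (∀ t, ((∑ w ∈ R, I.dRv w t : ℝ≥0) : ℝ≥0∞) ≤ I.dSv v t) then
      ((∑ w ∈ R, ∑ t, I.dRv w t * I.cSv v t : ℝ≥0) : ℝ≥0∞) else ⊤) ∧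
  (∀ v a b : VS, a ≠ b → childrenOf T v = {a, b} → ∀ R : Finset VR,
    D R v = ⨅ A ∈ R.powerset, fDP I D v a A + fDP I D v b (R \ A))

/-- The DP setting: the substrate is the bidirectional tree given by `T`, every node of `T`
is a leaf or has exactly two children, and every non-leaf node has capacity `0`. -/
def DPSetting [Fintype VS] [DecidableEq VS] (I : VNEP VS VR τ) (T : RTree VS) : Prop :=
  I.ES = T.edges ∧
  (∀ v : VS, childrenOf T v = ∅ ∨ ∃ a b : VS, a ≠ b ∧ childrenOf T v = {a, b}) ∧
  (∀ v : VS, childrenOf T v ≠ ∅ → I.dSv v = 0)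

/-- The substrate edge `eS` lies on the directed (upward) path in `T_v` from `w` to `v`. -/
def onUp (T : RTree VS) (v w : VS) (eS : VS × VS) : Prop :=
  ∃ i : ℕ, T.parent^[i] w = eS.1 ∧ T.parent eS.1 = eS.2 ∧ ∀ j ≤ i, T.parent^[j] w ≠ v

/-- The substrate edge `eS` lies on the directed (downward) path in `T_v` from `v` to `w`. -/
def onDown (T : RTree VS) (v w : VS) (eS : VS × VS) : Prop := onUp T v w (eS.2, eS.1)

/-- The edge set of the directed path in `T_v` from `w` up to `v`. -/
noncomputable def upEdges [Fintype VS] (T : RTree VS) (v w : VS) : Finset (VS × VS) :=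
  Finset.univ.filter fun eS => onUp T v w eS

/-- The edge set of the directed path in `T_v` from `v` down to `w`. -/
noncomputable def downEdges [Fintype VS] (T : RTree VS) (v w : VS) : Finset (VS × VS) :=
  Finset.univ.filter fun eS => onDown T v w eS

/-- `E^v_{eS}(X)`: the request edges of `cut(X)` whose source is mapped so that `eS` lies on
the upward path to `v`, together with the request edges of `cut⁻(X)` whose target is mapped
so that `eS` lies on the downward path from `v`. -/
noncomputable def EvSet (I : VNEP VS VR τ) (T : RTree VS) (v : VS) (X : Finset VR)
    (mV : VR → VS) (eS : VS × VS) : Finset (VR × VR) :=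
  (cutP I X).filter (fun e => onUp T v (mV e.1) eS) ∪
    (cutN I X).filter (fun e => onDown T v (mV e.2) eS)

/-- A desirable mapping of `G_R[X]` into `T_v`: a feasible mapping of the induced subrequest
into the subtree `T_v` such that every edge of `T_v` moreover has enough remaining capacity
for the cut edges routed through it towards/from `v`. -/
def Desirable (I : VNEP VS VR τ) (T : RTree VS) (v : VS) (X : Finset VR)
    (M : Mapping VS VR) : Prop :=
  (∀ w ∈ X, T.InSubtree v (M.mV w)) ∧
  (∀ e ∈ ERin I X, IsDiPath (fun a b => (a, b) ∈ I.ES) (M.mV e.1) (M.mV e.2) (M.mE e) ∧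
    ∀ x ∈ M.mE e, T.InSubtree v x) ∧
  (∀ s : VS, ∀ t : Fin τ,
    ((∑ w ∈ X.filter (fun w => M.mV w = s), I.dRv w t : ℝ≥0) : ℝ≥0∞) ≤ I.dSv s t) ∧
  (∀ eS ∈ I.ES, T.InSubtree v eS.1 → T.InSubtree v eS.2 → ∀ t : Fin τ,
    (((∑ eR ∈ (ERin I X).filter (fun eR => eS ∈ pathEdges (M.mE eR)), I.dRe eR t) +
        (∑ e ∈ EvSet I T v X M.mV eS, I.dRe e t) : ℝ≥0) : ℝ≥0∞) ≤ I.dSe eS t)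

/-- The induced cost of a mapping of `G_R[X]` into `T_v`: the cost of mapping the nodes of
`X` and the edges of `G_R[X]`, plus for each edge of `cut(X)` (resp. `cut⁻(X)`) the cost of
the path from the image of its source up to `v` (resp. from `v` down to the image of its
target). -/
noncomputable def inducedCost [Fintype VS] [DecidableEq VS] (I : VNEP VS VR τ)
    (T : RTree VS) (v : VS) (X : Finset VR) (M : Mapping VS VR) : ℝ≥0 :=
  (∑ w ∈ X, ∑ t, I.dRv w t * I.cSv (M.mV w) t) +
  (∑ e ∈ ERin I X, ∑ e' ∈ (pathEdges (M.mE e)).toFinset, ∑ t, I.dRe e t * I.cSe e' t) +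
  (∑ e ∈ cutP I X, ∑ e' ∈ upEdges T v (M.mV e.1), ∑ t, I.dRe e t * I.cSe e' t) +
  (∑ e ∈ cutN I X, ∑ e' ∈ downEdges T v (M.mV e.2), ∑ t, I.dRe e t * I.cSe e' t)

end DPDefs

section Helpers

theorem RTree.sub_trans {V : Type*} (T : RTree V) {v w x : V} (h1 : T.InSubtree v w)
    (h2 : T.InSubtree w x) : T.InSubtree v x := by
  obtain ⟨n, rfl⟩ := h1
  obtain ⟨m, rfl⟩ := h2
  exact ⟨n + m, Function.iterate_add_apply _ _ _ _⟩

theorem RTree.sub_child {V : Type*} (T : RTree V) {a v : V} (h : T.IsChild a v) :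
    T.InSubtree v a := ⟨1, h.2⟩

theorem RTree.cycle {V : Type*} (T : RTree V) {n : ℕ} {w : V}
    (h : T.parent^[n+1] w = w) : w = T.root := by
  obtain ⟨m, hm⟩ := T.reaches_root w
  have h1 : (T.parent^[n+1])^[m] w = w := Function.iterate_fixed h m
  rw [← Function.iterate_mul] at h1
  have h2 : (n+1) * m = n * m + m := by ring
  rw [h2, Function.iterate_add_apply, hm, Function.iterate_fixed T.parent_root] at h1
  exact h1.symm

theorem RTree.not_sub_child {V : Type*} (T : RTree V) {a v : V} (h : T.IsChild a v) :
    ¬ T.InSubtree a v := by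
  rintro ⟨n, hn⟩
  have h1 : T.parent^[n+1] v = v := by
    rw [Function.iterate_succ_apply', hn, h.2]
  have h2 := T.cycle h1
  rw [h2, Function.iterate_fixed T.parent_root] at hn
  exact h.1 (hn.symm.trans h2.symm)

theorem RTree.sub_disj_aux {V : Type*} (T : RTree V) {a b v x : V} (ha : T.IsChild a v)
    (hb : T.IsChild b v) (hab : a ≠ b) {n m : ℕ} (hnm : n ≤ m)
    (h1 : T.parent^[n] x = a) (h2 : T.parent^[m] x = b) : False := by
  obtain ⟨k, rfl⟩ := Nat.exists_eq_add_of_le hnm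
  rw [add_comm, Function.iterate_add_apply, h1] at h2
  cases k with
  | zero => exact hab h2
  | succ k =>
    rw [Function.iterate_succ_apply, ha.2] at h2
    exact T.not_sub_child hb ⟨k, h2⟩

theorem RTree.sub_disj {V : Type*} (T : RTree V) {a b v x : V} (ha : T.IsChild a v)
    (hb : T.IsChild b v) (hab : a ≠ b) (h1 : T.InSubtree a x) (h2 : T.InSubtree b x) :
    False := by
  obtain ⟨n, hn⟩ := h1
  obtain ⟨m, hm⟩ := h2
  rcases le_total n m with h | h
  · exact T.sub_disj_aux ha hb hab h hn hm
  · exact T.sub_disj_aux hb ha hab.symm h hm hn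

theorem RTree.sub_split {V : Type*} (T : RTree V) {v x : V} (h : T.InSubtree v x)
    (hx : x ≠ v) : ∃ a, T.IsChild a v ∧ T.InSubtree a x := by
  obtain ⟨n, hn⟩ := h
  induction n with
  | zero => exact absurd hn hx
  | succ n ih =>
    by_cases hy : T.parent^[n] x = v
    · exact ih hy
    · rw [Function.iterate_succ_apply'] at hn
      exact ⟨_, ⟨hy, hn⟩, n, rfl⟩

theorem onUp_split {V : Type*} (T : RTree V) {a v x : V} {e : V × V} (ha : T.IsChild a v)
    (h : onUp T v x e) : onUp T a x e ∨ e = (a, v) := by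
  obtain ⟨i, h1, h2, h3⟩ := h
  by_cases hj : ∀ j ≤ i, T.parent^[j] x ≠ a
  · exact Or.inl ⟨i, h1, h2, hj⟩
  · push Not at hj
    obtain ⟨j, hji, hj⟩ := hj
    rcases hji.eq_or_lt with rfl | hlt
    · right
      rw [hj] at h1
      rw [← h1, ha.2] at h2
      exact Prod.ext h1.symm h2.symm
    · exact absurd (by rw [Function.iterate_succ_apply', hj, ha.2]) (h3 (j+1) hlt)

theorem onUp_mem {V : Type*} (T : RTree V) {a x : V} {e : V × V} (hx : T.InSubtree a x)
    (h : onUp T a x e) : T.InSubtree a e.1 ∧ T.InSubtree a e.2 := by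
  obtain ⟨n, hn⟩ := hx
  obtain ⟨i, h1, h2, h3⟩ := h
  have hin : i < n := by
    by_contra hc
    exact h3 n (not_lt.mp hc) hn
  obtain ⟨k, rfl⟩ := Nat.exists_eq_add_of_lt hin
  have h4 : T.parent^[k+1] e.1 = a := by
    
    rw [← h1, ← Function.iterate_add_apply, show k + 1 + i = i + k + 1 by omega]
    exact hn
  refine ⟨⟨k+1, h4⟩, k, ?_⟩
  rw [← h2, ← Function.iterate_succ_apply, h4]

theorem onUp_step {V : Type*} (T : RTree V) {a x : V} {e : V × V} (hx : x ≠ a)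
    (h : onUp T a (T.parent x) e) : onUp T a x e := by
  obtain ⟨i, h1, h2, h3⟩ := h
  refine ⟨i+1, h1, h2, ?_⟩
  intro j hj
  cases j with
  | zero => exact hx
  | succ j => exact h3 j (by omega)

theorem pathEdges_cons_cons {α : Type*} (x y : α) (l : List α) :
    pathEdges (x :: y :: l) = (x, y) :: pathEdges (y :: l) := rfl

theorem mem_pathEdges {α : Type*} (c d : α) (p : List α) :
    (c, d) ∈ pathEdges p ↔ [c, d] <:+: p := by
  induction p with
  | nil => simp [pathEdges]
  | cons x l ih =>
    cases l with
    | nil =>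
      simp only [pathEdges, List.tail_cons, List.zip_nil_right, List.not_mem_nil, false_iff]
      intro h
      have := h.length_le
      simp at this
    | cons y l =>
      rw [pathEdges_cons_cons, List.mem_cons, ih, List.infix_cons_iff (l₂ := y :: l)]
      simp [List.cons_prefix_cons]

theorem mem_pathEdges_left {α : Type*} {e : α × α} {p : List α} (h : e ∈ pathEdges p) :
    e.1 ∈ p ∧ e.2 ∈ p :=
  ⟨(List.of_mem_zip h).1, List.mem_of_mem_tail (List.of_mem_zip h).2⟩

theorem mem_pathEdges_reverse {α : Type*} (e : α × α) (p : List α)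
    (h : e ∈ pathEdges p.reverse) : (e.2, e.1) ∈ pathEdges p := by
  obtain ⟨c, d⟩ := e
  rw [mem_pathEdges] at h
  rw [mem_pathEdges, ← List.reverse_infix]
  exact h

theorem mem_edges_iff {V : Type*} [Fintype V] [DecidableEq V] (T : RTree V) (a b : V) :
    (a, b) ∈ T.edges ↔ a ≠ b ∧ (T.parent a = b ∨ T.parent b = a) := by
  simp [RTree.edges]

theorem extendPath {V : Type*} [Fintype V] [DecidableEq V] (T : RTree V) {a v y : V}
    (ha : T.IsChild a v) (q : List V)
    (hq : IsDiPath (fun a b => (a, b) ∈ T.edges) v y q)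
    (hqa : ∀ z ∈ q, ¬ T.InSubtree a z) (n : ℕ) : ∀ x, T.parent^[n] x = a →
    ∃ p, IsDiPath (fun a b => (a, b) ∈ T.edges) x y p ∧
      (∀ z ∈ p, z ∈ q ∨ (T.InSubtree a z ∧ T.InSubtree z x)) ∧
      ∀ e ∈ pathEdges p, e ∈ pathEdges q ∨ e = (a, v) ∨ onUp T a x e := by
  have base : ∃ p, IsDiPath (fun a b => (a, b) ∈ T.edges) a y p ∧
      (∀ z ∈ p, z ∈ q ∨ (T.InSubtree a z ∧ T.InSubtree z a)) ∧
      ∀ e ∈ pathEdges p, e ∈ pathEdges q ∨ e = (a, v) ∨ onUp T a a e := by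
    obtain ⟨h1, h2, h3, h4⟩ := hq
    cases q with
    | nil => simp at h1
    | cons w l =>
      simp only [List.head?_cons, Option.some.injEq] at h1
      subst h1
      refine ⟨a :: w :: l, ⟨rfl, by simpa using h2, ?_, ?_⟩, ?_, ?_⟩
      · exact List.isChain_cons_cons.2 ⟨(mem_edges_iff T _ _).2 ⟨ha.1, Or.inl ha.2⟩, h3⟩
      · exact List.nodup_cons.2 ⟨fun h => hqa a h ⟨0, rfl⟩, h4⟩
      · intro z hz
        rcases List.mem_cons.1 hz with rfl | hz
        · exact Or.inr ⟨⟨0, rfl⟩, ⟨0, rfl⟩⟩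
        · exact Or.inl hz
      · intro e he
        rw [pathEdges_cons_cons] at he
        rcases List.mem_cons.1 he with rfl | he
        · exact Or.inr (Or.inl rfl)
        · exact Or.inl he
  induction n with
  | zero =>
    intro x hx
    have : x = a := hx
    subst this
    exact base
  | succ n ih =>
    intro x hx
    by_cases hxa : x = a
    · subst hxa
      exact base
    · have hpx : T.parent^[n] (T.parent x) = a := hx
      obtain ⟨p, ⟨h1, h2, h3, h4⟩, h5, h6⟩ := ih _ hpx
      have hns : ¬ T.InSubtree x (T.parent x) := by
        rintro ⟨m, hm⟩
        have hr := T.cycle (n := m) (w := x) hm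
        rw [hr, Function.iterate_fixed T.parent_root] at hx
        exact hxa (hr.trans hx)
      have hne : x ≠ T.parent x := fun h => hns ⟨0, h.symm⟩
      cases p with
      | nil => simp at h1
      | cons w l =>
        simp only [List.head?_cons, Option.some.injEq] at h1
        subst h1
        refine ⟨x :: T.parent x :: l, ⟨rfl, by simpa using h2, ?_, ?_⟩, ?_, ?_⟩
        · exact List.isChain_cons_cons.2 ⟨(mem_edges_iff T _ _).2 ⟨hne, Or.inl rfl⟩, h3⟩
        · refine List.nodup_cons.2 ⟨fun h => ?_, h4⟩
          rcases h5 _ h with h | h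
          · exact hqa _ h ⟨_, hx⟩
          · exact hns h.2
        · intro z hz
          rcases List.mem_cons.1 hz with rfl | hz
          · exact Or.inr ⟨⟨_, hx⟩, ⟨0, rfl⟩⟩
          · rcases h5 _ hz with h | h
            · exact Or.inl h
            · exact Or.inr ⟨h.1, T.sub_trans h.2 ⟨1, rfl⟩⟩
        · intro e he
          rw [pathEdges_cons_cons] at he
          rcases List.mem_cons.1 he with rfl | he
          · refine Or.inr (Or.inr ⟨0, rfl, rfl, ?_⟩)
            intro j hj
            obtain rfl : j = 0 := by omega
            exact hxa
          · rcases h6 e he with h | h | h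
            · exact Or.inl h
            · exact Or.inr (Or.inl h)
            · exact Or.inr (Or.inr (onUp_step T hxa h))

theorem crossPath {V : Type*} [Fintype V] [DecidableEq V] (T : RTree V) {a b v x y : V}
    (ha : T.IsChild a v) (hb : T.IsChild b v) (hab : a ≠ b)
    (hx : T.InSubtree a x) (hy : T.InSubtree b y) :
    ∃ p, IsDiPath (fun a b => (a, b) ∈ T.edges) x y p ∧
      (∀ z ∈ p, T.InSubtree v z) ∧
      ∀ e ∈ pathEdges p, (e = (a, v) ∨ onUp T a x e) ∨ (e = (v, b) ∨ onDown T b y e) := by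
  obtain ⟨m, hm⟩ := hy
  obtain ⟨n, hn⟩ := hx
  obtain ⟨q, ⟨h1, h2, h3, h4⟩, h5, h6⟩ := extendPath T hb [v] (y := v)
    ⟨rfl, rfl, List.isChain_singleton _, List.nodup_singleton _⟩
    (by simpa using T.not_sub_child hb) m y hm
  have hq : ∀ z ∈ q.reverse, z = v ∨ T.InSubtree b z := by
    intro z hz
    rcases h5 z (by simpa using hz) with h | h
    · exact Or.inl (by simpa using h)
    · exact Or.inr h.1
  obtain ⟨p, hp, h7, h8⟩ := extendPath T ha q.reverse (y := y)
    ⟨by simpa using h2, by simpa using h1, by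
      have h3' : List.IsChain (fun b a => (a, b) ∈ T.edges) q := List.IsChain.imp (by
          intro c d hcd
          rw [mem_edges_iff] at hcd ⊢
          exact ⟨hcd.1.symm, hcd.2.symm⟩) h3
      have := List.isChain_reverse.2 h3'
      exact this, List.nodup_reverse.2 h4⟩
    (by
      intro z hz hza
      rcases hq z hz with rfl | h
      · exact T.not_sub_child ha hza
      · exact T.sub_disj ha hb hab hza h) n x hn
  refine ⟨p, hp, ?_, ?_⟩
  · intro z hz
    rcases h7 z hz with h | h
    · rcases hq z h with rfl | h
      · exact ⟨0, rfl⟩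
      · exact T.sub_trans (T.sub_child hb) h
    · exact T.sub_trans (T.sub_child ha) h.1
  · intro e he
    rcases h8 e he with h | h | h
    · right
      rcases h6 _ (mem_pathEdges_reverse e q h) with h | h | h
      · simp [pathEdges] at h
      · left
        rw [Prod.ext_iff] at h ⊢
        exact ⟨h.2, h.1⟩
      · exact Or.inr h
    · exact Or.inl (Or.inl h)
    · exact Or.inl (Or.inr h)

variable {VS VR : Type*} {τ : ℕ}

/-- The substrate edge `eS` is used by the request edge `e`. -/
def Uses (T : RTree VS) (v : VS) (X : Finset VR) (M : Mapping VS VR) (e : VR × VR)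
    (eS : VS × VS) : Prop :=
  (e.1 ∈ X ∧ e.2 ∈ X ∧ eS ∈ pathEdges (M.mE e)) ∨
  (e.1 ∈ X ∧ e.2 ∉ X ∧ onUp T v (M.mV e.1) eS) ∨
  (e.1 ∉ X ∧ e.2 ∈ X ∧ onDown T v (M.mV e.2) eS)

/-- Usage including the edge between the child `x` and its parent `v`. -/
def CUses (T : RTree VS) (v x : VS) (X : Finset VR) (M : Mapping VS VR) (e : VR × VR)
    (eS : VS × VS) : Prop :=
  Uses T x X M e eS ∨ (e.1 ∈ X ∧ e.2 ∉ X ∧ eS = (x, v)) ∨ (e.1 ∉ X ∧ e.2 ∈ X ∧ eS = (v, x))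

theorem CUses.up {T : RTree VS} {v x : VS} {X : Finset VR} {M : Mapping VS VR} {e : VR × VR}
    {eS : VS × VS} (h1 : e.1 ∈ X) (h2 : e.2 ∉ X) (h : eS = (x, v) ∨ onUp T x (M.mV e.1) eS) :
    CUses T v x X M e eS := by
  rcases h with h | h
  · exact Or.inr (Or.inl ⟨h1, h2, h⟩)
  · exact Or.inl (Or.inr (Or.inl ⟨h1, h2, h⟩))

theorem CUses.down {T : RTree VS} {v x : VS} {X : Finset VR} {M : Mapping VS VR}
    {e : VR × VR} {eS : VS × VS} (h1 : e.1 ∉ X) (h2 : e.2 ∈ X)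
    (h : eS = (v, x) ∨ onDown T x (M.mV e.2) eS) :
    CUses T v x X M e eS := by
  rcases h with h | h
  · exact Or.inr (Or.inr ⟨h1, h2, h⟩)
  · exact Or.inl (Or.inr (Or.inr ⟨h1, h2, h⟩))

theorem load_eq (I : VNEP VS VR τ) (T : RTree VS) (v : VS) (X : Finset VR)
    (M : Mapping VS VR) (eS : VS × VS) (t : Fin τ) :
    (∑ eR ∈ (ERin I X).filter (fun eR => eS ∈ pathEdges (M.mE eR)), I.dRe eR t) +
        (∑ e ∈ EvSet I T v X M.mV eS, I.dRe e t)
      = ∑ e ∈ I.ER.filter (fun e => Uses T v X M e eS), I.dRe e t := by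
  rw [← Finset.sum_union]
  · apply Finset.sum_congr _ (fun _ _ => rfl)
    ext e
    simp only [ERin, EvSet, cutP, cutN, Finset.mem_union, Finset.mem_filter]
    simp only [Uses]
    tauto
  · rw [Finset.disjoint_left]
    intro e
    simp only [ERin, EvSet, cutP, cutN, Finset.mem_union, Finset.mem_filter]
    tauto

theorem cost_eq [Fintype VS] [DecidableEq VS] (I : VNEP VS VR τ) (T : RTree VS) (v : VS)
    (X : Finset VR) (M : Mapping VS VR) :
    inducedCost I T v X M = (∑ w ∈ X, ∑ t, I.dRv w t * I.cSv (M.mV w) t) +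
      ∑ e ∈ I.ER, ∑ eS ∈ Finset.univ.filter (fun eS => Uses T v X M e eS),
        ∑ t, I.dRe e t * I.cSe eS t := by
  unfold inducedCost
  rw [add_assoc, add_assoc]
  congr 1
  rw [ERin, cutP, cutN, Finset.sum_filter, Finset.sum_filter, Finset.sum_filter,
    ← Finset.sum_add_distrib, ← Finset.sum_add_distrib]
  apply Finset.sum_congr rfl
  intro e _
  by_cases h1 : e.1 ∈ X <;> by_cases h2 : e.2 ∈ X <;>
    simp only [h1, h2, Uses, upEdges, downEdges, true_and, false_and, and_true, and_false,
      not_true_eq_false, not_false_eq_true, if_true, if_false, add_zero, zero_add,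
      or_false, false_or, Finset.filter_false, Finset.sum_empty]
  apply Finset.sum_congr _ (fun _ _ => rfl)
  ext e'
  simp

/-- usage inside a subtree -/
theorem uses_mem (I : VNEP VS VR τ) (T : RTree VS) {x : VS} {X : Finset VR}
    {M : Mapping VS VR} (hM : Desirable I T x X M) {e : VR × VR} (he : e ∈ I.ER)
    {eS : VS × VS} (h : Uses T x X M e eS) : T.InSubtree x eS.1 ∧ T.InSubtree x eS.2 := by
  rcases h with ⟨h1, h2, h⟩ | ⟨h1, h2, h⟩ | ⟨h1, h2, h⟩
  · have h4 := mem_pathEdges_left h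
    have h5 := (hM.2.1 e (by simp [ERin, *])).2
    exact ⟨h5 _ h4.1, h5 _ h4.2⟩
  · exact onUp_mem T (hM.1 _ h1) h
  · exact (onUp_mem T (hM.1 _ h2) h).symm

theorem cuses_touch (I : VNEP VS VR τ) (T : RTree VS) {v x : VS} {X : Finset VR}
    {M : Mapping VS VR} (hM : Desirable I T x X M) {e : VR × VR} (he : e ∈ I.ER)
    {eS : VS × VS} (h : CUses T v x X M e eS) :
    (T.InSubtree x eS.1 ∨ eS.1 = v) ∧ (T.InSubtree x eS.2 ∨ eS.2 = v) := by
  have hxx : T.InSubtree x x := ⟨0, rfl⟩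
  rcases h with h | ⟨_, _, rfl⟩ | ⟨_, _, rfl⟩
  · have := uses_mem I T hM he h
    tauto
  · tauto
  · tauto

/-- capacity for the edges touching a child subtree -/
theorem cload_le [Fintype VS] [DecidableEq VS] (I : VNEP VS VR τ) (T : RTree VS)
    (hES : I.ES = T.edges) {v x : VS} (hx : T.IsChild x v) {X : Finset VR}
    {M : Mapping VS VR} (hM : Desirable I T x X M)
    (hc1 : ∀ t, ((∑ e ∈ cutP I X, I.dRe e t : ℝ≥0) : ℝ≥0∞) ≤ I.dSe (x, v) t)
    (hc2 : ∀ t, ((∑ e ∈ cutN I X, I.dRe e t : ℝ≥0) : ℝ≥0∞) ≤ I.dSe (v, x) t)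
    {eS : VS × VS} (heS : eS ∈ I.ES) (t : Fin τ)
    (h1 : T.InSubtree x eS.1 ∨ eS.1 = v) (h2 : T.InSubtree x eS.2 ∨ eS.2 = v) :
    ((∑ e ∈ I.ER.filter (fun e => CUses T v x X M e eS), I.dRe e t : ℝ≥0) : ℝ≥0∞)
      ≤ I.dSe eS t := by
  have hnv := T.not_sub_child hx
  obtain ⟨c, d⟩ := eS
  have hcd := heS
  rw [hES, mem_edges_iff] at hcd
  simp only at h1 h2
  have key : ∀ c, T.InSubtree x c → T.parent c = v → c = x := by
    rintro c ⟨n, hn⟩ hc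
    cases n with
    | zero => exact hn
    | succ n =>
      rw [Function.iterate_succ_apply, hc] at hn
      exact absurd ⟨n, hn⟩ hnv
  have key2 : ∀ c, T.InSubtree x c → T.parent v = c → False := by
    rintro c ⟨n, hn⟩ hc
    exact hnv ⟨n+1, by rw [Function.iterate_succ_apply, hc, hn]⟩
  have use_in : ∀ e ∈ I.ER, Uses T x X M e (c, d) → T.InSubtree x c ∧ T.InSubtree x d :=
    fun e he h => uses_mem I T hM he h
  by_cases hcv : c = v
  · subst hcv
    have hdx : d = x := by
      have hd : T.InSubtree x d := by
        rcases h2 with h | h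
        · exact h
        · exact absurd h.symm hcd.1
      rcases hcd.2 with h | h
      · exact (key2 d hd h).elim
      · exact key d hd h
    subst hdx
    refine le_trans (ENNReal.coe_le_coe.2 (Finset.sum_le_sum_of_subset ?_)) (hc2 t)
    intro e he
    rw [Finset.mem_filter] at he
    rw [cutN, Finset.mem_filter]
    refine ⟨he.1, ?_⟩
    rcases he.2 with h | ⟨_, _, h⟩ | ⟨h3, h4, h⟩
    · exact absurd (use_in e he.1 h).1 hnv
    · exact absurd (Prod.ext_iff.1 h).1 hcd.1
    · exact ⟨h3, h4⟩
  · have hcs : T.InSubtree x c := h1.resolve_right hcv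
    by_cases hdv : d = v
    · subst hdv
      have hcx : c = x := by
        rcases hcd.2 with h | h
        · exact key c hcs h
        · exact (key2 c hcs h).elim
      subst hcx
      refine le_trans (ENNReal.coe_le_coe.2 (Finset.sum_le_sum_of_subset ?_)) (hc1 t)
      intro e he
      rw [Finset.mem_filter] at he
      rw [cutP, Finset.mem_filter]
      refine ⟨he.1, ?_⟩
      rcases he.2 with h | ⟨h3, h4, h⟩ | ⟨_, _, h⟩
      · exact absurd (use_in e he.1 h).2 hnv
      · exact ⟨h3, h4⟩
      · exact absurd (Prod.ext_iff.1 h).1 hcv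
    · have hds : T.InSubtree x d := h2.resolve_right hdv
      have := hM.2.2.2 (c, d) heS hcs hds t
      rw [load_eq] at this
      refine le_trans (ENNReal.coe_le_coe.2 (Finset.sum_le_sum_of_subset ?_)) this
      intro e he
      rw [Finset.mem_filter] at he ⊢
      refine ⟨he.1, ?_⟩
      rcases he.2 with h | ⟨h3, h4, h⟩ | ⟨_, _, h⟩
      · exact h
      · exact absurd (Prod.ext_iff.1 h).2 hdv
      · exact absurd (Prod.ext_iff.1 h).1 hcv

theorem ccost_le [Fintype VS] [DecidableEq VS] (I : VNEP VS VR τ) (T : RTree VS)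
    (v x : VS) (X : Finset VR) (M : Mapping VS VR) :
    (∑ w ∈ X, ∑ t, I.dRv w t * I.cSv (M.mV w) t) +
      ∑ e ∈ I.ER, ∑ eS ∈ Finset.univ.filter (fun eS => CUses T v x X M e eS),
        ∑ t, I.dRe e t * I.cSe eS t ≤
    inducedCost I T x X M + (∑ e ∈ cutN I X, ∑ t, I.dRe e t * I.cSe (v, x) t)
      + (∑ e ∈ cutP I X, ∑ t, I.dRe e t * I.cSe (x, v) t) := by
  rw [cost_eq, add_assoc, add_assoc]
  gcongr
  rw [cutP, cutN, Finset.sum_filter, Finset.sum_filter,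
    ← Finset.sum_add_distrib, ← Finset.sum_add_distrib]
  apply Finset.sum_le_sum
  intro e _
  have hsub : Finset.univ.filter (fun eS => CUses T v x X M e eS) ⊆
      Finset.univ.filter (fun eS => Uses T x X M e eS) ∪
        ((if e.1 ∉ X ∧ e.2 ∈ X then {(v, x)} else ∅) ∪
         (if e.1 ∈ X ∧ e.2 ∉ X then {(x, v)} else ∅)) := by
    intro eS h
    simp only [Finset.mem_filter, Finset.mem_univ, true_and] at h
    simp only [Finset.mem_union, Finset.mem_filter, Finset.mem_univ, true_and]
    rcases h with h | ⟨h3, h4, h⟩ | ⟨h3, h4, h⟩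
    · exact Or.inl h
    · right; right; rw [if_pos ⟨h3, h4⟩]; simpa using h
    · right; left; rw [if_pos ⟨h3, h4⟩]; simpa using h
  have hun : ∀ (s t : Finset (VS × VS)) (g : VS × VS → ℝ≥0),
      ∑ i ∈ s ∪ t, g i ≤ ∑ i ∈ s, g i + ∑ i ∈ t, g i := by
    intro s t g
    rw [← Finset.sum_union_inter]
    exact le_self_add
  refine (Finset.sum_le_sum_of_subset hsub).trans ((hun _ _ _).trans ?_)
  gcongr
  refine (hun _ _ _).trans ?_
  gcongr
  · split_ifs <;> simp
  · split_ifs <;> simp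

end Helpers

theorem combine {VS VR : Type*} {τ : ℕ} [Fintype VS] [DecidableEq VS]
    (I : VNEP VS VR τ) (T : RTree VS)
    (hES : I.ES = T.edges) {v a b : VS} (hab : a ≠ b) (ha : T.IsChild a v)
    (hb : T.IsChild b v) (hch : ∀ x, T.IsChild x v → x = a ∨ x = b)
    {X A B : Finset VR} (hX : ∀ w, w ∈ X ↔ w ∈ A ∨ w ∈ B) (hdis : ∀ w ∈ A, w ∉ B)
    {Ma Mb : Mapping VS VR} (hMa : Desirable I T a A Ma) (hMb : Desirable I T b B Mb)
    (ha1 : ∀ t, ((∑ e ∈ cutP I A, I.dRe e t : ℝ≥0) : ℝ≥0∞) ≤ I.dSe (a, v) t)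
    (ha2 : ∀ t, ((∑ e ∈ cutN I A, I.dRe e t : ℝ≥0) : ℝ≥0∞) ≤ I.dSe (v, a) t)
    (hb1 : ∀ t, ((∑ e ∈ cutP I B, I.dRe e t : ℝ≥0) : ℝ≥0∞) ≤ I.dSe (b, v) t)
    (hb2 : ∀ t, ((∑ e ∈ cutN I B, I.dRe e t : ℝ≥0) : ℝ≥0∞) ≤ I.dSe (v, b) t) :
    ∃ M : Mapping VS VR, Desirable I T v X M ∧
      inducedCost I T v X M ≤
        (inducedCost I T a A Ma + (∑ e ∈ cutN I A, ∑ t, I.dRe e t * I.cSe (v, a) t)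
          + (∑ e ∈ cutP I A, ∑ t, I.dRe e t * I.cSe (a, v) t)) +
        (inducedCost I T b B Mb + (∑ e ∈ cutN I B, ∑ t, I.dRe e t * I.cSe (v, b) t)
          + (∑ e ∈ cutP I B, ∑ t, I.dRe e t * I.cSe (b, v) t)) := by
  have hdis' : ∀ w ∈ B, w ∉ A := fun w h1 h2 => hdis w h2 h1
  obtain ⟨mV, hmA, hmB⟩ : ∃ mV : VR → VS, (∀ w ∈ A, mV w = Ma.mV w) ∧
      (∀ w ∈ B, mV w = Mb.mV w) := by
    refine ⟨fun w => if w ∈ A then Ma.mV w else Mb.mV w, ?_, ?_⟩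
    · intro w hw
      simp [hw]
    · intro w hw
      simp [hdis' w hw]
  have hpath : ∀ e : VR × VR, ∃ p : List VS, e ∈ ERin I X →
      IsDiPath (fun a b => (a, b) ∈ T.edges) (mV e.1) (mV e.2) p ∧
      (∀ z ∈ p, T.InSubtree v z) ∧
      ∀ eS ∈ pathEdges p, CUses T v a A Ma e eS ∨ CUses T v b B Mb e eS := by
    intro e
    by_cases he : e ∈ ERin I X
    swap
    · exact ⟨[], fun h => absurd h he⟩
    simp only [ERin, Finset.mem_filter, hX] at he
    obtain ⟨heR, h1 | h1, h2 | h2⟩ := he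
    · have := hMa.2.1 e (by simp [ERin, *])
      rw [hES, ← hmA _ h1, ← hmA _ h2] at this
      exact ⟨_, fun _ => ⟨this.1, fun z hz => T.sub_trans (T.sub_child ha) (this.2 z hz),
        fun eS h => Or.inl (Or.inl (Or.inl ⟨h1, h2, h⟩))⟩⟩
    · obtain ⟨p, hp1, hp2, hp3⟩ := crossPath T ha hb hab (hMa.1 _ h1) (hMb.1 _ h2)
      rw [← hmA _ h1, ← hmB _ h2] at hp1
      refine ⟨p, fun _ => ⟨hp1, hp2, fun eS h => ?_⟩⟩
      have h1' := hdis _ h1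
      have h2' := hdis' _ h2
      exact (hp3 eS h).imp (CUses.up h1 h2') (CUses.down h1' h2)
    · obtain ⟨p, hp1, hp2, hp3⟩ := crossPath T hb ha hab.symm (hMb.1 _ h1) (hMa.1 _ h2)
      rw [← hmA _ h2, ← hmB _ h1] at hp1
      refine ⟨p, fun _ => ⟨hp1, hp2, fun eS h => ?_⟩⟩
      have h1' := hdis' _ h1
      have h2' := hdis _ h2
      exact ((hp3 eS h).imp (CUses.up h1 h2') (CUses.down h1' h2)).symm
    · have := hMb.2.1 e (by simp [ERin, *])
      rw [hES, ← hmB _ h1, ← hmB _ h2] at this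
      exact ⟨_, fun _ => ⟨this.1, fun z hz => T.sub_trans (T.sub_child hb) (this.2 z hz),
        fun eS h => Or.inr (Or.inl (Or.inl ⟨h1, h2, h⟩))⟩⟩
  choose mE hmE using hpath
  have huse : ∀ e ∈ I.ER, ∀ eS, Uses T v X ⟨mV, mE⟩ e eS →
      CUses T v a A Ma e eS ∨ CUses T v b B Mb e eS := by
    intro e he eS h
    rcases h with ⟨h1, h2, h⟩ | ⟨h1, h2, h⟩ | ⟨h1, h2, h⟩
    · exact (hmE e (Finset.mem_filter.2 ⟨he, h1, h2⟩)).2.2 eS h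
    · simp only at h
      rw [hX, not_or] at h2
      rcases (hX _).1 h1 with h1 | h1
      · rw [hmA _ h1] at h
        exact Or.inl (CUses.up h1 h2.1 (onUp_split T ha h).symm)
      · rw [hmB _ h1] at h
        exact Or.inr (CUses.up h1 h2.2 (onUp_split T hb h).symm)
    · simp only [onDown] at h
      rw [hX, not_or] at h1
      have hsw : ∀ x, (eS.2, eS.1) = (x, v) → eS = (v, x) := by
        intro x hx
        rw [Prod.ext_iff] at hx ⊢
        exact hx.symm
      rcases (hX _).1 h2 with h2 | h2
      · rw [hmA _ h2] at h
        exact Or.inl (CUses.down h1.1 h2 ((onUp_split T ha h).symm.imp (hsw a) id))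
      · rw [hmB _ h2] at h
        exact Or.inr (CUses.down h1.2 h2 ((onUp_split T hb h).symm.imp (hsw b) id))
  refine ⟨⟨mV, mE⟩, ⟨?_, ?_, ?_, ?_⟩, ?_⟩
  · intro w hw
    rcases (hX _).1 hw with h | h
    · simp only [hmA _ h]
      exact T.sub_trans (T.sub_child ha) (hMa.1 _ h)
    · simp only [hmB _ h]
      exact T.sub_trans (T.sub_child hb) (hMb.1 _ h)
  · intro e he
    rw [hES]
    exact ⟨(hmE e he).1, (hmE e he).2.1⟩
  · intro s t
    by_cases hs : T.InSubtree a s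
    · refine le_trans (ENNReal.coe_le_coe.2 (Finset.sum_le_sum_of_subset ?_)) (hMa.2.2.1 s t)
      intro w hw
      simp only [Finset.mem_filter, hX] at hw ⊢
      obtain ⟨h | h, hw⟩ := hw
      · exact ⟨h, by rw [← hmA _ h, hw]⟩
      · rw [hmB _ h] at hw
        exact (T.sub_disj ha hb hab hs (hw ▸ hMb.1 _ h)).elim
    · refine le_trans (ENNReal.coe_le_coe.2 (Finset.sum_le_sum_of_subset ?_)) (hMb.2.2.1 s t)
      intro w hw
      simp only [Finset.mem_filter, hX] at hw ⊢
      obtain ⟨h | h, hw⟩ := hw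
      · rw [hmA _ h] at hw
        exact (hs (hw ▸ hMa.1 _ h)).elim
      · exact ⟨h, by rw [← hmB _ h, hw]⟩
  · intro eS heS h1 h2 t
    rw [load_eq]
    have hne : eS.1 ≠ eS.2 := by
      have := heS
      rw [hES] at this
      exact ((mem_edges_iff T eS.1 eS.2).1 this).1
    have hd : ∀ x, T.InSubtree a x → ¬ T.InSubtree b x := fun x h h' =>
      T.sub_disj ha hb hab h h'
    have hvv : ¬ (eS.1 = v ∧ eS.2 = v) := fun h => hne (h.1.trans h.2.symm)
    by_cases hA : (T.InSubtree a eS.1 ∨ eS.1 = v) ∧ (T.InSubtree a eS.2 ∨ eS.2 = v)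
    · refine le_trans (ENNReal.coe_le_coe.2 (Finset.sum_le_sum_of_subset ?_))
        (cload_le I T hES ha hMa ha1 ha2 heS t hA.1 hA.2)
      intro e he
      simp only [Finset.mem_filter] at he ⊢
      refine ⟨he.1, (huse e he.1 eS he.2).resolve_right fun h => ?_⟩
      have hB := cuses_touch I T hMb he.1 h
      have h1v : eS.1 = v := hA.1.elim
        (fun h => hB.1.resolve_left (hd _ h)) id
      have h2v : eS.2 = v := hA.2.elim
        (fun h => hB.2.resolve_left (hd _ h)) id
      exact hvv ⟨h1v, h2v⟩
    · by_cases hB : (T.InSubtree b eS.1 ∨ eS.1 = v) ∧ (T.InSubtree b eS.2 ∨ eS.2 = v)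
      · refine le_trans (ENNReal.coe_le_coe.2 (Finset.sum_le_sum_of_subset ?_))
          (cload_le I T hES hb hMb hb1 hb2 heS t hB.1 hB.2)
        intro e he
        simp only [Finset.mem_filter] at he ⊢
        exact ⟨he.1, (huse e he.1 eS he.2).resolve_left fun h =>
          hA (cuses_touch I T hMa he.1 h)⟩
      · rw [Finset.filter_false_of_mem]
        · simp
        · intro e he h
          rcases huse e he eS h with h | h
          · exact hA (cuses_touch I T hMa he h)
          · exact hB (cuses_touch I T hMb he h)
  · refine le_trans ?_ (add_le_add (ccost_le I T v a A Ma) (ccost_le I T v b B Mb))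
    rw [cost_eq, add_add_add_comm]
    apply add_le_add
    · have hXe : X = A.disjUnion B (Finset.disjoint_left.2 fun {w} => hdis w) := by
        ext w
        simp [hX]
      rw [hXe, Finset.sum_disjUnion]
      apply le_of_eq
      congr 1
      · exact Finset.sum_congr rfl fun w hw => by simp only [hmA _ hw]
      · exact Finset.sum_congr rfl fun w hw => by simp only [hmB _ hw]
    · rw [← Finset.sum_add_distrib]
      apply Finset.sum_le_sum
      intro e he
      rw [← Finset.sum_union_inter]
      refine le_trans (Finset.sum_le_sum_of_subset ?_) le_self_add
      intro eS h
      simp only [Finset.mem_union, Finset.mem_filter, Finset.mem_univ, true_and] at h ⊢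
      exact huse e he eS h

theorem leafCase {VS VR : Type*} {τ : ℕ} [Fintype VS] [DecidableEq VS]
    (I : VNEP VS VR τ) (T : RTree VS) (hES : I.ES = T.edges) {v : VS}
    (hch : ∀ x, ¬ T.IsChild x v) {X : Finset VR}
    (hc : ∀ t, ((∑ w ∈ X, I.dRv w t : ℝ≥0) : ℝ≥0∞) ≤ I.dSv v t) :
    ∃ M : Mapping VS VR, Desirable I T v X M ∧
      inducedCost I T v X M ≤ ∑ w ∈ X, ∑ t, I.dRv w t * I.cSv v t := by
  have hup : ∀ eS, ¬ onUp T v v eS := by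
    rintro eS ⟨i, _, _, h⟩
    exact h 0 (Nat.zero_le _) rfl
  have hu : ∀ e eS, ¬ Uses T v X ⟨fun _ => v, fun _ => [v]⟩ e eS := by
    intro e eS h
    simp [Uses, onDown, hup, pathEdges] at h
  have hsub : ∀ x, T.InSubtree v x → x = v := by
    intro x hx
    by_contra hxv
    obtain ⟨c, hc, _⟩ := T.sub_split hx hxv
    exact hch c hc
  refine ⟨⟨fun _ => v, fun _ => [v]⟩, ⟨?_, ?_, ?_, ?_⟩, ?_⟩
  · exact fun w _ => ⟨0, rfl⟩
  · intro e he
    refine ⟨⟨rfl, rfl, List.isChain_singleton _, List.nodup_singleton _⟩, ?_⟩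
    intro x hx
    rw [List.mem_singleton.1 hx]
    exact ⟨0, rfl⟩
  · intro s t
    by_cases hs : v = s
    · subst hs
      simpa using hc t
    · simp [hs]
  · intro eS heS h1 h2 t
    rw [load_eq, Finset.filter_false_of_mem (fun e _ => hu e eS)]
    simp
  · rw [cost_eq]
    simp [hu]

/-- Lemma 3.4 of the paper: in the DP setting, for every substrate node `v` and every subset
`X` of request nodes, if `D[X, v] < ∞` then there is a desirable mapping of `G_R[X]` into
`T_v` whose induced cost is at most `D[X, v]`. -/
theorem dp_table_yields_desirable_mapping {VS VR : Type*} [Fintype VS] [DecidableEq VS]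
    [Fintype VR] [DecidableEq VR] {τ : ℕ} (I : VNEP VS VR τ) (T : RTree VS)
    (hDP : DPSetting I T) (D : Finset VR → VS → ℝ≥0∞) (hD : IsDPTable I T D) :
    ∀ (v : VS) (X : Finset VR), D X v < ⊤ →
      ∃ M : Mapping VS VR, Desirable I T v X M ∧
        (inducedCost I T v X M : ℝ≥0∞) ≤ D X v := by
  have hi1 : (fun a b => Classical.propDecidable (a = b)) = ‹DecidableEq VS› :=
    Subsingleton.elim _ _
  have hi2 : (fun a b => Classical.propDecidable (a = b)) = ‹DecidableEq VR› :=
    Subsingleton.elim _ _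
  subst hi1 hi2
  obtain ⟨hES, hch, -⟩ := hDP
  obtain ⟨hleaf, hint⟩ := hD
  suffices H : ∀ (n : ℕ) (v : VS) (X : Finset VR),
      (Finset.univ.filter fun w => T.InSubtree v w).card ≤ n → D X v < ⊤ →
      ∃ M : Mapping VS VR, Desirable I T v X M ∧
        (inducedCost I T v X M : ℝ≥0∞) ≤ D X v from
    fun v X h => H _ v X le_rfl h
  intro n
  induction n with
  | zero =>
    intro v X hn _
    exfalso
    have : v ∈ Finset.univ.filter fun w => T.InSubtree v w := by
      simp only [Finset.mem_filter, Finset.mem_univ, true_and]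
      exact ⟨0, rfl⟩
    have := Finset.card_pos.2 ⟨v, this⟩
    omega
  | succ n ih =>
    intro v X hn hlt
    rcases hch v with hv | ⟨a, b, hab, hv⟩
    · have hDv := hleaf v hv X
      split_ifs at hDv with hc
      · rw [hDv]
        obtain ⟨M, hM, hcost⟩ := leafCase I T hES (v := v) (X := X) (by
          intro x hx
          have : x ∈ childrenOf T v := by simp [childrenOf, hx]
          rw [hv] at this
          simp at this) hc
        exact ⟨M, hM, ENNReal.coe_le_coe.2 hcost⟩
      · rw [hDv] at hlt
        exact absurd hlt (lt_irrefl _)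
    · have hmem : ∀ x, T.IsChild x v ↔ x = a ∨ x = b := by
        intro x
        have : x ∈ childrenOf T v ↔ x = a ∨ x = b := by rw [hv]; simp
        rw [← this]
        simp [childrenOf]
      have ha : T.IsChild a v := (hmem a).2 (Or.inl rfl)
      have hb : T.IsChild b v := (hmem b).2 (Or.inr rfl)
      have hcard : ∀ x, T.IsChild x v →
          (Finset.univ.filter fun w => T.InSubtree x w).card ≤ n := by
        intro x hx
        refine Nat.lt_succ_iff.1 (lt_of_lt_of_le (Finset.card_lt_card ?_) hn)
        rw [Finset.ssubset_iff_of_subset]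
        · refine ⟨v, ?_, ?_⟩
          · simp only [Finset.mem_filter, Finset.mem_univ, true_and]
            exact ⟨0, rfl⟩
          · simp only [Finset.mem_filter, Finset.mem_univ, true_and]
            exact T.not_sub_child hx
        · intro w hw
          simp only [Finset.mem_filter, Finset.mem_univ, true_and] at hw ⊢
          exact T.sub_trans (T.sub_child hx) hw
      have hDv := hint v a b hab hv X
      rw [← Finset.inf_eq_iInf] at hDv
      obtain ⟨A, hA, hAe⟩ := Finset.exists_mem_eq_inf X.powerset ⟨∅, by simp⟩
        (fun A => fDP I D v a A + fDP I D v b (X \ A))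
      rw [hAe] at hDv
      rw [hDv] at hlt ⊢
      obtain ⟨hfa, hfb⟩ := ENNReal.add_lt_top.1 hlt
      have hstep : ∀ x, T.IsChild x v → ∀ R, fDP I D v x R < ⊤ →
          ∃ M : Mapping VS VR, Desirable I T x R M ∧
          (∀ t, ((∑ e ∈ cutP I R, I.dRe e t : ℝ≥0) : ℝ≥0∞) ≤ I.dSe (x, v) t) ∧
          (∀ t, ((∑ e ∈ cutN I R, I.dRe e t : ℝ≥0) : ℝ≥0∞) ≤ I.dSe (v, x) t) ∧
          ((inducedCost I T x R M + (∑ e ∈ cutN I R, ∑ t, I.dRe e t * I.cSe (v, x) t)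
          + (∑ e ∈ cutP I R, ∑ t, I.dRe e t * I.cSe (x, v) t) : ℝ≥0) : ℝ≥0∞)
            ≤ fDP I D v x R := by
        intro x hx R hf
        unfold fDP at hf ⊢
        split_ifs at hf ⊢ with hc
        · obtain ⟨M, hM, hcost⟩ := ih x R (hcard x hx)
            (lt_of_le_of_lt (le_trans le_self_add le_self_add) hf)
          refine ⟨M, hM, hc.1, hc.2, ?_⟩
          rw [ENNReal.coe_add, ENNReal.coe_add]
          gcongr
        · exact absurd hf (lt_irrefl _)
      obtain ⟨Ma, hMa, ha1, ha2, hca⟩ := hstep a ha _ hfa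
      obtain ⟨Mb, hMb, hb1, hb2, hcb⟩ := hstep b hb _ hfb
      obtain ⟨M, hM, hc⟩ := combine I T hES hab ha hb (fun x hx => (hmem x).1 hx)
        (X := X) (by
          intro w
          have : w ∈ A → w ∈ X := fun h => Finset.mem_powerset.1 hA h
          simp only [Finset.mem_sdiff]
          tauto) (by
          intro w hw
          simp [hw]) hMa hMb ha1 ha2 hb1 hb2
      refine ⟨M, hM, (ENNReal.coe_le_coe.2 hc).trans ?_⟩
      rw [ENNReal.coe_add]
      exact add_le_add hca hcb
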